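/- Let (G,C) be a strongly connected inhomogeneous Mauldin–Williams graph in ℝ^d satisfying the SOSC, with the sets X_i having pairwise disjoint interiors, such that ∫₀^∞ e^{−s₀(G)t} N_{e^{−t}}(C_i) dt < ∞ for all i ∈ V, and set K^C = ⋃_{i∈V} K_i^C. If G_M = τℤ for some τ > 0, then for every y ∈ [0, τ), lim_{n→∞} e^{−s₀(G)(nτ+y)} N_{e^{−(nτ+y)}}(K^C) exists and equals Σ_{i∈V} h_i(y), where h_i : ℝ → [δ,∞) are the τ-periodic functions with lim_{n→∞} N_{e^{−(nτ+y)}}(K_i^C)/(h_i(y)e^{s₀(G)(nτ+y)}) = 1. -/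

import Mathlib

open Set Filter Topology MeasureTheory Metric

noncomputable section

/-- Points of `ℝ^d`. -/
abbrev Pt (d : ℕ) := EuclideanSpace ℝ (Fin d)

/-- The `r`-covering number of `A ⊆ ℝ^d`: the least number of closed balls of
radius `r` needed to cover `A`. -/
noncomputable def coveringNumber {d : ℕ} (A : Set (Pt d)) (r : ℝ) : ℕ :=
  sInf {k : ℕ | ∃ c : Fin k → Pt d, A ⊆ ⋃ i, Metric.closedBall (c i) r}

/-- A Mauldin–Williams graph in `ℝ^d` over a finite directed multigraph with
vertex type `V` and edge type `E`: each vertex `i` carries a non-empty compact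
set `X i` equal to the closure of its interior, and each edge `e` carries a
contractive similarity `S e` of ratio `r e ∈ (0,1)` mapping `X (term e)` into
`X (init e)`. -/
structure MWGraph (d : ℕ) (V E : Type) [Fintype V] [Fintype E] where
  init : E → V
  term : E → V
  X : V → Set (Pt d)
  S : E → Pt d → Pt d
  r : E → ℝ
  X_nonempty : ∀ i, (X i).Nonempty
  X_compact : ∀ i, IsCompact (X i)
  X_regular : ∀ i, closure (interior (X i)) = X i
  r_pos : ∀ e, 0 < r e
  r_lt_one : ∀ e, r e < 1
  S_maps : ∀ e, Set.MapsTo (S e) (X (term e)) (X (init e))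
  S_sim : ∀ e x y, dist (S e x) (S e y) = r e * dist x y

namespace MWGraph

variable {d : ℕ} {V E : Type} [Fintype V] [Fintype E]

variable (G : MWGraph d V E)

/-- `G.IsPathFrom j γ` holds iff the list of edges `γ` is a directed path
starting at vertex `j`. -/
def IsPathFrom : V → List E → Prop
  | _, [] => True
  | j, e :: es => G.init e = j ∧ IsPathFrom (G.term e) es

/-- Terminal vertex of the path `γ` starting at `j`. -/
def pathTerm : V → List E → V
  | j, [] => j
  | _, e :: es => pathTerm (G.term e) es

/-- `S_γ = S_{e₁} ∘ ⋯ ∘ S_{eₙ}` (with `S_∅ = id`). -/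
def pathMap : List E → Pt d → Pt d
  | [] => id
  | e :: es => G.S e ∘ pathMap es

/-- `r_γ = r_{e₁} ⋯ r_{eₙ}` (with `r_∅ = 1`). -/
def pathRatio (γ : List E) : ℝ := (γ.map G.r).prod

/-- The underlying multigraph is strongly connected: for every ordered pair of
vertices there is a (non-empty) directed path from the first to the second. -/
def StronglyConnected : Prop :=
  ∀ i j : V, ∃ γ : List E, γ ≠ [] ∧ G.IsPathFrom i γ ∧ G.pathTerm i γ = j

/-- `K` is the list of graph-directed self-similar sets of `G`: the unique list
of non-empty compact sets with `K i = ⋃_{e ∈ E_i} S_e (K (term e))`. -/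
def IsAttractor (K : V → Set (Pt d)) : Prop :=
  (∀ i, IsCompact (K i)) ∧ (∀ i, (K i).Nonempty) ∧
    ∀ i, K i = ⋃ e ∈ {e : E | G.init e = i}, G.S e '' K (G.term e)

/-- `C` is an admissible list of condensation sets: compact subsets of the `X i`. -/
def IsCondensation (C : V → Set (Pt d)) : Prop :=
  ∀ i, IsCompact (C i) ∧ C i ⊆ G.X i

/-- `K` is the list of inhomogeneous graph-directed self-similar sets of `(G, C)`:
the unique list of non-empty compact sets with
`K i = ⋃_{e ∈ E_i} S_e (K (term e)) ∪ C i`. -/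
def IsInhomAttractor (C : V → Set (Pt d)) (K : V → Set (Pt d)) : Prop :=
  (∀ i, IsCompact (K i)) ∧ (∀ i, (K i).Nonempty) ∧
    ∀ i, K i = (⋃ e ∈ {e : E | G.init e = i}, G.S e '' K (G.term e)) ∪ C i

/-- `G` satisfies the open set condition with the open sets `U`. -/
def IsOSCWith (U : V → Set (Pt d)) : Prop :=
  (∀ i, (U i).Nonempty) ∧ (∀ i, IsOpen (U i)) ∧ (∀ i, Bornology.IsBounded (U i)) ∧
    (∀ i, U i ⊆ G.X i) ∧
    (∀ i, (⋃ e ∈ {e : E | G.init e = i}, G.S e '' U (G.term e)) ⊆ U i) ∧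
    ∀ e e' : E, G.init e = G.init e' → e ≠ e' →
      Disjoint (G.S e '' U (G.term e)) (G.S e' '' U (G.term e'))

/-- The set `{-log r_γ : γ a directed cycle of G}`. -/
def cycleSet : Set ℝ :=
  {x : ℝ | ∃ (j : V) (γ : List E), γ ≠ [] ∧ G.IsPathFrom j γ ∧ G.pathTerm j γ = j ∧
    x = -Real.log (G.pathRatio γ)}

/-- `G_M`, the smallest closed additive subgroup of `ℝ` containing
`{-log r_γ : γ a directed cycle}`. -/
def GM : Set ℝ := closure ((AddSubgroup.closure (G.cycleSet) : AddSubgroup ℝ) : Set ℝ)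

variable [DecidableEq V]

/-- The matrix `A_G^s` with entries `(A_G^s)_{ij} = Σ_{e ∈ E_{ij}} r_e^s`. -/
def Amatrix (s : ℝ) : Matrix V V ℝ :=
  Matrix.of fun i j => ∑ e : E, if G.init e = i ∧ G.term e = j then G.r e ^ s else 0

end MWGraph

/-- Spectral radius of a real square matrix: the largest modulus of a complex
eigenvalue. -/
noncomputable def matrixSpectralRadius {n : Type} [Fintype n] [DecidableEq n]
    (A : Matrix n n ℝ) : ℝ :=
  sSup {x : ℝ | ∃ μ : ℂ, μ ∈ spectrum ℂ (A.map (fun a : ℝ => (a : ℂ))) ∧ x = ‖μ‖}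

/-- `s` is the (unique) exponent `s ≥ 0` with `ρ(A_G^s) = 1`, i.e. `s = s₀(G)`. -/
def IsS0 {d : ℕ} {V E : Type} [Fintype V] [Fintype E] [DecidableEq V]
    (G : MWGraph d V E) (s : ℝ) : Prop :=
  0 ≤ s ∧ matrixSpectralRadius (G.Amatrix s) = 1

section CoveringNumber

variable {d : ℕ} {A B : Set (Pt d)} {r : ℝ}

lemma coveringNumber_le_card {ι : Type*} [Fintype ι] (c : ι → Pt d)
    (hc : A ⊆ ⋃ i, closedBall (c i) r) : coveringNumber A r ≤ Fintype.card ι := by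
  refine Nat.sInf_le ⟨c ∘ (Fintype.equivFin ι).symm, fun x hx => ?_⟩
  obtain ⟨i, hi⟩ := mem_iUnion.1 (hc hx)
  exact mem_iUnion.2 ⟨Fintype.equivFin ι i, by simpa using hi⟩

lemma exists_cover_coveringNumber (hA : Bornology.IsBounded A) (hr : 0 < r) :
    ∃ c : Fin (coveringNumber A r) → Pt d, A ⊆ ⋃ i, closedBall (c i) r := by
  refine Nat.sInf_mem (s := {k : ℕ | ∃ c : Fin k → Pt d, A ⊆ ⋃ i, closedBall (c i) r}) ?_
  obtain ⟨t, ht, htA⟩ :=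
    totallyBounded_iff.1 (hA.isCompact_closure.totallyBounded.subset subset_closure) r hr
  have := ht.fintype
  refine ⟨Fintype.card t, fun k => (Fintype.equivFin t).symm k, fun x hx => ?_⟩
  obtain ⟨y, hy, hxy⟩ := mem_iUnion₂.1 (htA hx)
  exact mem_iUnion.2 ⟨Fintype.equivFin t ⟨y, hy⟩, by simpa using (mem_ball.1 hxy).le⟩

lemma coveringNumber_mono (hB : Bornology.IsBounded B) (hr : 0 < r) (hAB : A ⊆ B) :
    coveringNumber A r ≤ coveringNumber B r := by
  obtain ⟨c, hc⟩ := exists_cover_coveringNumber hB hr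
  simpa using coveringNumber_le_card c (hAB.trans hc)

lemma coveringNumber_anti (hA : Bornology.IsBounded A) {r' : ℝ} (hr : 0 < r) (hrr' : r ≤ r') :
    coveringNumber A r' ≤ coveringNumber A r := by
  obtain ⟨c, hc⟩ := exists_cover_coveringNumber hA hr
  simpa using coveringNumber_le_card c
    (hc.trans (iUnion_mono fun i => closedBall_subset_closedBall hrr'))

lemma coveringNumber_union_le (hA : Bornology.IsBounded A) (hB : Bornology.IsBounded B)
    (hr : 0 < r) : coveringNumber (A ∪ B) r ≤ coveringNumber A r + coveringNumber B r := by
  obtain ⟨c, hc⟩ := exists_cover_coveringNumber hA hr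
  obtain ⟨c', hc'⟩ := exists_cover_coveringNumber hB hr
  simpa using coveringNumber_le_card (Sum.elim c c') (by
    rw [iUnion_sum]
    exact union_subset_union hc hc')

lemma coveringNumber_empty : coveringNumber (∅ : Set (Pt d)) r = 0 := by
  simpa using coveringNumber_le_card (A := (∅ : Set (Pt d))) (r := r)
    (fun i : Empty => i.elim) (empty_subset _)

lemma coveringNumber_biUnion_le {ι : Type*} (s : Finset ι) (A : ι → Set (Pt d))
    (hA : ∀ i ∈ s, Bornology.IsBounded (A i)) (hr : 0 < r) :
    coveringNumber (⋃ i ∈ s, A i) r ≤ ∑ i ∈ s, coveringNumber (A i) r := by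
  classical
  induction s using Finset.induction_on with
  | empty => simp [coveringNumber_empty]
  | insert a s ha ih =>
    rw [Finset.set_biUnion_insert, Finset.sum_insert ha]
    have hs : ∀ i ∈ s, Bornology.IsBounded (A i) := fun i hi =>
      hA i (Finset.mem_insert_of_mem hi)
    exact (coveringNumber_union_le (hA a (Finset.mem_insert_self _ _))
      ((Bornology.isBounded_biUnion_finset s).2 hs) hr).trans
      (Nat.add_le_add_left (ih hs) _)

/-- Sets at mutual distance more than `2 * r` share no ball of radius `r`. -/
lemma sum_coveringNumber_le {ι : Type*} (s : Finset ι) (A : ι → Set (Pt d))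
    (hB : Bornology.IsBounded B) (hr : 0 < r) (hAB : ∀ a ∈ s, A a ⊆ B)
    (hsep : ∀ a ∈ s, ∀ b ∈ s, a ≠ b → ∀ x ∈ A a, ∀ y ∈ A b, 2 * r < dist x y) :
    ∑ a ∈ s, coveringNumber (A a) r ≤ coveringNumber B r := by
  classical
  obtain ⟨c, hc⟩ := exists_cover_coveringNumber hB hr
  let J : ι → Finset (Fin (coveringNumber B r)) := fun a =>
    Finset.univ.filter fun k => (closedBall (c k) r ∩ A a).Nonempty
  have hle : ∀ a ∈ s, coveringNumber (A a) r ≤ (J a).card := by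
    intro a ha
    have := coveringNumber_le_card (A := A a) (r := r) (fun k : J a => c k) (by
      intro x hx
      obtain ⟨k, hk⟩ := mem_iUnion.1 (hc (hAB a ha hx))
      exact mem_iUnion.2 ⟨⟨k, by simpa [J] using ⟨x, hk, hx⟩⟩, hk⟩)
    simpa using this
  have hdisj : (s : Set ι).PairwiseDisjoint J := by
    intro a ha b hb hab
    refine Finset.disjoint_left.2 fun k hka hkb => ?_
    obtain ⟨x, hxk, hx⟩ := (Finset.mem_filter.1 hka).2
    obtain ⟨y, hyk, hy⟩ := (Finset.mem_filter.1 hkb).2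
    have h1 := hsep a ha b hb hab x hx y hy
    have h2 := dist_triangle_right x y (c k)
    rw [mem_closedBall] at hxk hyk
    linarith
  calc ∑ a ∈ s, coveringNumber (A a) r ≤ ∑ a ∈ s, (J a).card := Finset.sum_le_sum hle
    _ = (s.biUnion J).card := (Finset.card_biUnion hdisj).symm
    _ ≤ coveringNumber B r := by simpa using Finset.card_le_univ (s.biUnion J)

variable {f : Pt d → Pt d} {ρ : ℝ}

lemma isBounded_image_of_dist_eq (hA : Bornology.IsBounded A)
    (hf : ∀ x y, dist (f x) (f y) = ρ * dist x y) : Bornology.IsBounded (f '' A) :=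
  (LipschitzWith.of_dist_le_mul (K := ρ.toNNReal) fun x y => by
    rw [hf]; gcongr; exact Real.le_coe_toNNReal ρ).isBounded_image hA

lemma coveringNumber_image_le (hA : Bornology.IsBounded A) (hr : 0 < r) (hρ : 0 < ρ)
    (hf : ∀ x y, dist (f x) (f y) = ρ * dist x y) :
    coveringNumber (f '' A) r ≤ coveringNumber A (r / ρ) := by
  obtain ⟨c, hc⟩ := exists_cover_coveringNumber hA (div_pos hr hρ)
  simpa using coveringNumber_le_card (A := f '' A) (r := r) (f ∘ c) (by
    rintro _ ⟨x, hx, rfl⟩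
    obtain ⟨k, hk⟩ := mem_iUnion.1 (hc hx)
    refine mem_iUnion.2 ⟨k, ?_⟩
    rw [mem_closedBall, le_div_iff₀ hρ] at hk
    rw [mem_closedBall, Function.comp_apply, hf]
    linarith)

lemma coveringNumber_le_image (hA : Bornology.IsBounded A) (hr : 0 < r) (hρ : 0 < ρ)
    (hf : ∀ x y, dist (f x) (f y) = ρ * dist x y) :
    coveringNumber A (r / (ρ / 2)) ≤ coveringNumber (f '' A) r := by
  classical
  obtain ⟨c, hc⟩ := exists_cover_coveringNumber (isBounded_image_of_dist_eq hA hf) hr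
  have key : ∀ k, ∃ y, ∀ x ∈ A, f x ∈ closedBall (c k) r → dist x y ≤ r / (ρ / 2) := by
    intro k
    by_cases h : ∃ y ∈ A, f y ∈ closedBall (c k) r
    · obtain ⟨y, -, hy⟩ := h
      refine ⟨y, fun x _ hx => ?_⟩
      rw [mem_closedBall] at hx hy
      have h1 := dist_triangle_right (f x) (f y) (c k)
      rw [hf] at h1
      rw [le_div_iff₀ (half_pos hρ)]
      linarith
    · exact ⟨0, fun x hx hxk => (h ⟨x, hx, hxk⟩).elim⟩
  choose y hy using key
  simpa using coveringNumber_le_card (A := A) (r := r / (ρ / 2)) y (by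
    intro x hx
    obtain ⟨k, hk⟩ := mem_iUnion.1 (hc (mem_image_of_mem f hx))
    exact mem_iUnion.2 ⟨k, hy k x hx hk⟩)

lemma tendsto_div_nhdsGT_zero {a : ℝ} (ha : 0 < a) :
    Tendsto (fun r : ℝ => r / a) (𝓝[>] 0) (𝓝[>] 0) := by
  refine tendsto_nhdsWithin_iff.2 ⟨?_, ?_⟩
  · have : Tendsto (fun r : ℝ => r / a) (𝓝 0) (𝓝 (0 / a)) := tendsto_id.div_const a
    rw [zero_div] at this
    exact this.mono_left nhdsWithin_le_nhds
  · filter_upwards [self_mem_nhdsWithin] with r hr using div_pos hr ha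

/-- The normalised covering numbers at arbitrary scales are controlled by those at the
scales `exp (-(n * τ))`. -/
lemma exists_lattice_bounds (hA : Bornology.IsBounded A) {s τ : ℝ} (hs : 0 ≤ s) (hτ : 0 < τ) :
    ∃ n : ℝ → ℕ, Tendsto n (𝓝[>] 0) atTop ∧ ∀ᶠ r in 𝓝[>] (0 : ℝ),
      Real.exp (-(s * τ)) * (Real.exp (-s * (n r * τ)) *
        coveringNumber A (Real.exp (-(n r * τ)))) ≤ r ^ s * coveringNumber A r ∧
      r ^ s * coveringNumber A r ≤ Real.exp (s * τ) * (Real.exp (-s * ((n r + 1 : ℕ) * τ)) *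
        coveringNumber A (Real.exp (-((n r + 1 : ℕ) * τ)))) := by
  refine ⟨fun r => ⌊-Real.log r / τ⌋₊, ?_, ?_⟩
  · refine tendsto_nat_floor_atTop.comp (Tendsto.atTop_div_const hτ ?_)
    exact tendsto_neg_atBot_atTop.comp Real.tendsto_log_nhdsGT_zero
  · filter_upwards [Ioo_mem_nhdsGT (zero_lt_one' ℝ)] with r hr
    obtain ⟨hr0, hr1⟩ := hr
    set n := ⌊-Real.log r / τ⌋₊
    have ht : 0 ≤ -Real.log r := by linarith [Real.log_nonpos hr0.le hr1.le]
    have h1 : n * τ ≤ -Real.log r :=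
      (le_div_iff₀ hτ).1 (Nat.floor_le (div_nonneg ht hτ.le))
    have h2 : -Real.log r ≤ (n + 1) * τ :=
      (div_le_iff₀ hτ).1 (Nat.lt_floor_add_one (-Real.log r / τ)).le
    have hrs : r ^ s = Real.exp (Real.log r * s) := Real.rpow_def_of_pos hr0 s
    rw [hrs]
    constructor
    · rw [← mul_assoc, ← Real.exp_add]
      gcongr
      · nlinarith
      · refine coveringNumber_anti hA hr0 ?_
        rw [← Real.log_le_iff_le_exp hr0]
        linarith
    · rw [← mul_assoc, ← Real.exp_add]
      gcongr
      · push_cast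
        nlinarith
      · refine coveringNumber_anti hA (Real.exp_pos _) ?_
        rw [← Real.le_log_iff_exp_le hr0]
        push_cast
        linarith

lemma tendsto_rpow_mul_coveringNumber_zero (hA : Bornology.IsBounded A) {s : ℝ} (hs : 0 ≤ s)
    (hint : ∫⁻ t in Ioi (0 : ℝ),
      ENNReal.ofReal (Real.exp (-s * t) * (coveringNumber A (Real.exp (-t)) : ℝ)) < ⊤) :
    Tendsto (fun r : ℝ => r ^ s * (coveringNumber A r : ℝ)) (𝓝[>] 0) (𝓝 0) := by
  set f : ℝ → ENNReal := fun t =>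
    ENNReal.ofReal (Real.exp (-s * t) * (coveringNumber A (Real.exp (-t)) : ℝ))
  set u : ℕ → ℝ := fun n => Real.exp (-s * n) * coveringNumber A (Real.exp (-(n : ℝ))) with hu
  have hun : ∀ n, 0 ≤ u n := fun n => by positivity
  have hle : ∀ n : ℕ, ENNReal.ofReal (Real.exp (-s) * u n) ≤
      ∫⁻ t in Ioc (n : ℝ) (n + 1), f t := by
    intro n
    have : ∫⁻ _ in Ioc (n : ℝ) (n + 1), ENNReal.ofReal (Real.exp (-s) * u n) ≤
        ∫⁻ t in Ioc (n : ℝ) (n + 1), f t := by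
      refine setLIntegral_mono' measurableSet_Ioc fun t ht => ENNReal.ofReal_le_ofReal ?_
      rw [hu, ← mul_assoc, ← Real.exp_add]
      gcongr
      · nlinarith [ht.2]
      · refine coveringNumber_anti hA (Real.exp_pos _) ?_
        rw [Real.exp_le_exp]
        linarith [ht.1]
    simpa using this
  have hsum : ∑' n : ℕ, ∫⁻ t in Ioc (n : ℝ) (n + 1), f t ≠ ⊤ := by
    rw [← lintegral_iUnion (fun _ => measurableSet_Ioc)]
    · refine ((lintegral_mono_set (iUnion_subset fun n t ht => ?_)).trans_lt hint).ne
      exact (Nat.cast_nonneg n).trans_lt ht.1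
    · intro m n hmn
      refine Set.disjoint_left.2 fun t hm hn => hmn ?_
      have h1 : m < n + 1 := by exact_mod_cast hm.1.trans_le hn.2
      have h2 : n < m + 1 := by exact_mod_cast hn.1.trans_le hm.2
      omega
  have hzero : Tendsto (fun n => ENNReal.ofReal (Real.exp (-s) * u n)) atTop (𝓝 0) :=
    tendsto_of_tendsto_of_tendsto_of_le_of_le tendsto_const_nhds
      (ENNReal.tendsto_atTop_zero_of_tsum_ne_top hsum) (fun _ => zero_le) hle
  have hu0 : Tendsto u atTop (𝓝 0) := by
    have h1 := (ENNReal.tendsto_toReal ENNReal.zero_ne_top).comp hzero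
    have h2 := h1.const_mul (Real.exp s)
    refine (h2.congr fun n => ?_).trans (by simp)
    have : 0 ≤ Real.exp (-s) * u n := mul_nonneg (Real.exp_pos _).le (hun n)
    rw [Function.comp_apply, ENNReal.toReal_ofReal this, ← mul_assoc, ← Real.exp_add]
    simp
  obtain ⟨n, hn, hbd⟩ := exists_lattice_bounds hA hs zero_lt_one
  have hlim : Tendsto (fun r => Real.exp (s * 1) * u (n r + 1)) (𝓝[>] 0) (𝓝 0) := by
    simpa using ((hu0.comp (tendsto_add_atTop_nat 1)).comp hn).const_mul (Real.exp (s * 1))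
  refine tendsto_of_tendsto_of_tendsto_of_le_of_le' tendsto_const_nhds hlim ?_ ?_
  · filter_upwards [self_mem_nhdsWithin] with r hr
    have : (0 : ℝ) < r := hr
    positivity
  · filter_upwards [hbd] with r hr
    simpa [hu] using hr.2

/-- Two-sided bounds at all scales, from the asymptotics along one lattice of scales. -/
lemma eventually_bounds_of_tendsto (hA : Bornology.IsBounded A) {s τ a : ℝ} (hs : 0 ≤ s)
    (hτ : 0 < τ) (ha : 0 < a)
    (hlim : Tendsto (fun n : ℕ => Real.exp (-s * (n * τ)) *
      (coveringNumber A (Real.exp (-(n * τ))) : ℝ)) atTop (𝓝 a)) :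
    ∀ᶠ r in 𝓝[>] (0 : ℝ), Real.exp (-(s * τ)) * (a / 2) ≤ r ^ s * coveringNumber A r ∧
      r ^ s * coveringNumber A r ≤ Real.exp (s * τ) * (2 * a) := by
  obtain ⟨n, hn, hbd⟩ := exists_lattice_bounds hA hs hτ
  have hlow := hn.eventually (hlim.eventually_const_lt (half_lt_self ha))
  have hup := (hn.eventually ((tendsto_add_atTop_nat 1).eventually
    (hlim.eventually_lt_const (lt_two_mul_self ha))))
  filter_upwards [hbd, hlow, hup] with r hr h1 h2
  exact ⟨le_trans (by gcongr) hr.1, hr.2.trans (by gcongr)⟩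

lemma eventually_rpow_mul_coveringNumber_image_le {M s : ℝ} (hA : Bornology.IsBounded A)
    (hρ : 0 < ρ) (hf : ∀ x y, dist (f x) (f y) = ρ * dist x y)
    (hM : ∀ᶠ r in 𝓝[>] (0 : ℝ), r ^ s * coveringNumber A r ≤ M) :
    ∀ᶠ r in 𝓝[>] (0 : ℝ), r ^ s * coveringNumber (f '' A) r ≤ ρ ^ s * M := by
  filter_upwards [self_mem_nhdsWithin, (tendsto_div_nhdsGT_zero hρ).eventually hM] with r hr h
  have hr : 0 < r := hr
  calc r ^ s * (coveringNumber (f '' A) r : ℝ) ≤ r ^ s * coveringNumber A (r / ρ) := by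
        gcongr; exact coveringNumber_image_le hA hr hρ hf
    _ = ρ ^ s * ((r / ρ) ^ s * coveringNumber A (r / ρ)) := by
        rw [← mul_assoc, ← Real.mul_rpow hρ.le (by positivity), mul_div_cancel₀ _ hρ.ne']
    _ ≤ ρ ^ s * M := by gcongr

lemma eventually_le_rpow_mul_coveringNumber_image {m s : ℝ} (hA : Bornology.IsBounded A)
    (hρ : 0 < ρ) (hf : ∀ x y, dist (f x) (f y) = ρ * dist x y)
    (hm : ∀ᶠ r in 𝓝[>] (0 : ℝ), m ≤ r ^ s * coveringNumber A r) :
    ∀ᶠ r in 𝓝[>] (0 : ℝ), (ρ / 2) ^ s * m ≤ r ^ s * coveringNumber (f '' A) r := by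
  have hρ2 := half_pos hρ
  filter_upwards [self_mem_nhdsWithin, (tendsto_div_nhdsGT_zero hρ2).eventually hm] with r hr h
  have hr : 0 < r := hr
  calc (ρ / 2) ^ s * m ≤ (ρ / 2) ^ s * ((r / (ρ / 2)) ^ s * coveringNumber A (r / (ρ / 2))) := by
        gcongr
    _ = r ^ s * coveringNumber A (r / (ρ / 2)) := by
        rw [← mul_assoc, ← Real.mul_rpow hρ2.le (by positivity), mul_div_cancel₀ _ hρ2.ne']
    _ ≤ r ^ s * (coveringNumber (f '' A) r : ℝ) := by
        gcongr; exact coveringNumber_le_image hA hr hρ hf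

lemma eventually_two_mul_lt_dist (hA : IsCompact A) (hB : IsClosed B) (hAB : Disjoint A B) :
    ∀ᶠ r in 𝓝[>] (0 : ℝ), ∀ x ∈ A, ∀ y ∈ B, 2 * r < dist x y := by
  obtain ⟨ε, hε, h⟩ := exists_pos_forall_lt_edist hA hB hAB
  filter_upwards [Ioo_mem_nhdsGT (half_pos (NNReal.coe_pos.2 hε))] with r hr x hx y hy
  have h1 := h x hx y hy
  rw [edist_nndist, ENNReal.coe_lt_coe, ← NNReal.coe_lt_coe, coe_nndist] at h1
  linarith [hr.2]

end CoveringNumber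

namespace MWGraph

variable {d : ℕ} {V E : Type} [Fintype V] [Fintype E] (G : MWGraph d V E)

lemma pathRatio_pos (γ : List E) : 0 < G.pathRatio γ :=
  List.prod_pos (by simpa using fun e _ => G.r_pos e)

lemma pathRatio_append (γ γ' : List E) :
    G.pathRatio (γ ++ γ') = G.pathRatio γ * G.pathRatio γ' := by
  simp [pathRatio]

lemma pathMap_append (γ γ' : List E) :
    G.pathMap (γ ++ γ') = G.pathMap γ ∘ G.pathMap γ' := by
  induction γ with
  | nil => rfl
  | cons e γ ih => rw [List.cons_append, pathMap, pathMap, ih, Function.comp_assoc]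

lemma pathTerm_append (i : V) (γ γ' : List E) :
    G.pathTerm i (γ ++ γ') = G.pathTerm (G.pathTerm i γ) γ' := by
  induction γ generalizing i with
  | nil => rfl
  | cons e γ ih => exact ih _

lemma isPathFrom_append {i : V} {γ γ' : List E} :
    G.IsPathFrom i (γ ++ γ') ↔ G.IsPathFrom i γ ∧ G.IsPathFrom (G.pathTerm i γ) γ' := by
  induction γ generalizing i with
  | nil => simp [IsPathFrom, pathTerm]
  | cons e γ ih => simp [IsPathFrom, pathTerm, ih, and_assoc]

lemma dist_pathMap (γ : List E) (x y : Pt d) :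
    dist (G.pathMap γ x) (G.pathMap γ y) = G.pathRatio γ * dist x y := by
  induction γ with
  | nil => simp [pathMap, pathRatio]
  | cons e γ ih =>
    rw [pathMap, Function.comp_apply, Function.comp_apply, G.S_sim, ih]
    simp [pathRatio, mul_assoc]

lemma continuous_pathMap (γ : List E) : Continuous (G.pathMap γ) :=
  (LipschitzWith.of_dist_le_mul (K := (G.pathRatio γ).toNNReal) fun x y => by
    rw [dist_pathMap]; gcongr; exact Real.le_coe_toNNReal _).continuous

lemma S_injective (e : E) : Function.Injective (G.S e) := by
  intro x y hxy
  have := G.S_sim e x y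
  rw [hxy, dist_self, zero_eq_mul] at this
  have hxy0 := this.resolve_left (G.r_pos e).ne'
  exact dist_eq_zero.1 hxy0

/-- A family of sets which every edge map sends into itself is preserved by path maps. -/
lemma image_pathMap_subset {Y : V → Set (Pt d)}
    (hY : ∀ e, G.S e '' Y (G.term e) ⊆ Y (G.init e)) {i : V} {γ : List E}
    (hγ : G.IsPathFrom i γ) : G.pathMap γ '' Y (G.pathTerm i γ) ⊆ Y i := by
  induction γ generalizing i with
  | nil => simp [pathMap, pathTerm]
  | cons e γ ih =>
    obtain ⟨rfl, hγ⟩ := hγ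
    rw [pathMap, image_comp]
    exact (image_mono (ih hγ)).trans (hY e)

lemma image_pathMap_append_subset {Y : V → Set (Pt d)}
    (hY : ∀ e, G.S e '' Y (G.term e) ⊆ Y (G.init e)) {i : V} {γ γ' : List E}
    (hγ : G.IsPathFrom i (γ ++ γ')) :
    G.pathMap (γ ++ γ') '' Y (G.pathTerm i (γ ++ γ')) ⊆
      G.pathMap γ '' Y (G.pathTerm i γ) := by
  rw [pathMap_append, image_comp, pathTerm_append]
  exact image_mono (G.image_pathMap_subset hY (G.isPathFrom_append.1 hγ).2)

lemma image_X_subset (e : E) : G.S e '' G.X (G.term e) ⊆ G.X (G.init e) :=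
  (G.S_maps e).image_subset

lemma IsInhomAttractor.image_subset {G : MWGraph d V E} {C KC : V → Set (Pt d)}
    (hKC : G.IsInhomAttractor C KC) (e : E) : G.S e '' KC (G.term e) ⊆ KC (G.init e) := by
  rw [hKC.2.2 (G.init e)]
  exact subset_union_of_subset_left
    (subset_biUnion_of_mem (s := {e' | G.init e' = G.init e})
      (u := fun e => G.S e '' KC (G.term e)) rfl) _

lemma IsOSCWith.image_subset {G : MWGraph d V E} {U : V → Set (Pt d)}
    (hU : G.IsOSCWith U) (e : E) : G.S e '' U (G.term e) ⊆ U (G.init e) :=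
  (subset_biUnion_of_mem (s := {e' | G.init e' = G.init e})
    (u := fun e => G.S e '' U (G.term e)) rfl).trans (hU.2.2.2.2.1 (G.init e))

lemma IsAttractor.isInhomAttractor {G : MWGraph d V E} {K : V → Set (Pt d)}
    (hK : G.IsAttractor K) : G.IsInhomAttractor (fun _ => ∅) K :=
  ⟨hK.1, hK.2.1, fun i => by rw [union_empty]; exact hK.2.2 i⟩

/-- Unfolding the defining equation `n` times. -/
lemma IsInhomAttractor.exists_path {G : MWGraph d V E} {C KC : V → Set (Pt d)}
    (hKC : G.IsInhomAttractor C KC) (n : ℕ) {i : V} {x : Pt d} (hx : x ∈ KC i) :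
    (∃ γ : List E, γ.length = n ∧ G.IsPathFrom i γ ∧
      x ∈ G.pathMap γ '' KC (G.pathTerm i γ)) ∨
    ∃ γ : List E, γ.length < n ∧ G.IsPathFrom i γ ∧
      x ∈ G.pathMap γ '' C (G.pathTerm i γ) := by
  induction n generalizing i x with
  | zero => exact Or.inl ⟨[], rfl, trivial, x, hx, rfl⟩
  | succ n ih =>
    rw [hKC.2.2 i] at hx
    rcases hx with hx | hx
    · simp only [mem_iUnion] at hx
      obtain ⟨e, rfl, y, hy, rfl⟩ := hx
      rcases ih hy with ⟨γ, hn, hγ, z, hz, rfl⟩ | ⟨γ, hn, hγ, z, hz, rfl⟩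
      · exact Or.inl ⟨e :: γ, by simp [hn], ⟨rfl, hγ⟩, z, hz, rfl⟩
      · exact Or.inr ⟨e :: γ, by simpa using hn, ⟨rfl, hγ⟩, z, hz, rfl⟩
    · exact Or.inr ⟨[], by simp, trivial, x, hx, rfl⟩

lemma exists_pathRatio_lt {ε : ℝ} (hε : 0 < ε) :
    ∃ n : ℕ, ∀ γ : List E, γ.length = n → G.pathRatio γ < ε := by
  have h1 : ∀ᶠ ρ in 𝓝[<] (1 : ℝ), ∀ e, G.r e ≤ ρ := by
    refine eventually_all.2 fun e => ?_
    filter_upwards [Ioo_mem_nhdsLT (G.r_lt_one e)] with ρ hρ using hρ.1.le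
  obtain ⟨ρ, hρ, hρ0, hρ1⟩ := (h1.and (Ioo_mem_nhdsLT (zero_lt_one' ℝ))).exists
  obtain ⟨n, hn⟩ := exists_pow_lt_of_lt_one hε hρ1
  refine ⟨n, fun γ hγ => lt_of_le_of_lt ?_ hn⟩
  rw [← hγ]
  clear hγ
  induction γ with
  | nil => simp [pathRatio]
  | cons e γ ih =>
    have : G.pathRatio (e :: γ) = G.r e * G.pathRatio γ := by simp [pathRatio]
    rw [this, List.length_cons, pow_succ']
    exact mul_le_mul (hρ e) ih (G.pathRatio_pos γ).le hρ0.le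

/-- Paths which are long enough shrink a given bounded family below any scale. -/
lemma exists_dist_pathMap_lt {Y : V → Set (Pt d)} (hY : ∀ i, Bornology.IsBounded (Y i))
    {ε : ℝ} (hε : 0 < ε) :
    ∃ n : ℕ, ∀ γ : List E, γ.length = n → ∀ j, ∀ x ∈ Y j, ∀ y ∈ Y j,
      dist (G.pathMap γ x) (G.pathMap γ y) < ε := by
  obtain ⟨D, hD⟩ := isBounded_iff.1 (Bornology.isBounded_iUnion.2 hY)
  obtain ⟨n, hn⟩ := G.exists_pathRatio_lt (ε := ε / (|D| + 1)) (by positivity)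
  refine ⟨n, fun γ hγ j x hx y hy => ?_⟩
  have h1 : dist x y < |D| + 1 :=
    ((hD (mem_iUnion_of_mem j hx) (mem_iUnion_of_mem j hy)).trans (le_abs_self D)).trans_lt
      (lt_add_one _)
  have h2 := (lt_div_iff₀ (by positivity)).1 (hn γ hγ)
  rw [dist_pathMap]
  exact (mul_le_mul_of_nonneg_left h1.le (G.pathRatio_pos γ).le).trans_lt h2

lemma IsInhomAttractor.subset_X {G : MWGraph d V E} {C KC : V → Set (Pt d)}
    (hKC : G.IsInhomAttractor C KC) (hC : ∀ i, C i ⊆ G.X i) (i : V) : KC i ⊆ G.X i := by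
  intro x hx
  rw [← (G.X_compact i).isClosed.closure_eq, Metric.mem_closure_iff]
  intro ε hε
  obtain ⟨n, hn⟩ := G.exists_dist_pathMap_lt (Y := fun j => KC j ∪ G.X j)
    (fun j => (hKC.1 j).isBounded.union (G.X_compact j).isBounded) hε
  rcases hKC.exists_path n hx with ⟨γ, hγn, hγ, y, hy, rfl⟩ | ⟨γ, -, hγ, y, hy, rfl⟩
  · obtain ⟨z, hz⟩ := G.X_nonempty (G.pathTerm i γ)
    exact ⟨G.pathMap γ z, G.image_pathMap_subset G.image_X_subset hγ (mem_image_of_mem _ hz),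
      hn γ hγn _ y (Or.inl hy) z (Or.inr hz)⟩
  · exact ⟨_, G.image_pathMap_subset G.image_X_subset hγ (mem_image_of_mem _ (hC _ hy)),
      by simpa using hε⟩

/-- A path whose image of the seed set lies in the open set of its initial vertex. -/
lemma exists_interior_path {K U : V → Set (Pt d)} (hK : G.IsAttractor K)
    (hU : G.IsOSCWith U) (hUK : ∀ i, (U i ∩ K i).Nonempty) (i : V) :
    ∃ γ : List E, G.IsPathFrom i γ ∧ G.pathMap γ '' G.X (G.pathTerm i γ) ⊆ U i := by
  obtain ⟨x, hxU, hxK⟩ := hUK i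
  obtain ⟨ε, hε, hball⟩ := Metric.isOpen_iff.1 (hU.2.1 i) x hxU
  obtain ⟨n, hn⟩ := G.exists_dist_pathMap_lt (fun j => (G.X_compact j).isBounded) hε
  have hKX := hK.isInhomAttractor.subset_X fun i => empty_subset (G.X i)
  rcases hK.isInhomAttractor.exists_path n hxK with
    ⟨γ, hγn, hγ, y, hy, rfl⟩ | ⟨γ, -, -, y, hy, -⟩
  · refine ⟨γ, hγ, ?_⟩
    rintro _ ⟨z, hz, rfl⟩
    exact hball (hn γ hγn _ z hz y (hKX _ hy))
  · exact hy.elim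

lemma IsOSCWith.disjoint_image_pathMap {G : MWGraph d V E} {U : V → Set (Pt d)}
    (hU : G.IsOSCWith U) {i : V} {γ γ' : List E} (hγ : G.IsPathFrom i γ)
    (hγ' : G.IsPathFrom i γ') (h : ¬ γ <+: γ') (h' : ¬ γ' <+: γ) :
    Disjoint (G.pathMap γ '' U (G.pathTerm i γ)) (G.pathMap γ' '' U (G.pathTerm i γ')) := by
  induction γ generalizing i γ' with
  | nil => exact (h List.nil_prefix).elim
  | cons e γ ih =>
    cases γ' with
    | nil => exact (h' List.nil_prefix).elim
    | cons e' γ' =>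
      obtain ⟨rfl, hγ⟩ := hγ
      obtain ⟨hinit, hγ'⟩ := hγ'
      simp only [pathMap, pathTerm, image_comp]
      by_cases hee : e = e'
      · subst hee
        rw [disjoint_image_iff (G.S_injective e)]
        exact ih hγ hγ' (fun hp => h (by simpa using hp)) (fun hp => h' (by simpa using hp))
      · have hsub := G.image_pathMap_subset hU.image_subset hγ
        have hsub' := G.image_pathMap_subset hU.image_subset hγ'
        refine Disjoint.mono (image_mono hsub) (image_mono hsub') ?_
        exact hU.2.2.2.2.2 e e' hinit.symm hee

/-- The paths of length `n` from `i` whose image of the seed set is not inside `U i`. -/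
def boundaryPaths (U : V → Set (Pt d)) (i : V) (n : ℕ) : Finset (List E) :=
  ((List.finite_length_eq E n).subset (t := {γ : List E | γ.length = n ∧ G.IsPathFrom i γ ∧
    ¬ G.pathMap γ '' G.X (G.pathTerm i γ) ⊆ U i}) fun _ hγ => hγ.1).toFinset

lemma mem_boundaryPaths {U : V → Set (Pt d)} {i : V} {n : ℕ} {γ : List E} :
    γ ∈ G.boundaryPaths U i n ↔ γ.length = n ∧ G.IsPathFrom i γ ∧
      ¬ G.pathMap γ '' G.X (G.pathTerm i γ) ⊆ U i := by
  simp [boundaryPaths]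

/-- The paths of length less than `n` from `i`. -/
def shortPaths (i : V) (n : ℕ) : Finset (List E) :=
  ((List.finite_length_lt E n).subset (t := {γ : List E | γ.length < n ∧ G.IsPathFrom i γ})
    fun _ hγ => hγ.1).toFinset

lemma mem_shortPaths {i : V} {n : ℕ} {γ : List E} :
    γ ∈ G.shortPaths i n ↔ γ.length < n ∧ G.IsPathFrom i γ := by
  simp [shortPaths]

section Bounds

variable {G} {C KC U : V → Set (Pt d)} {s m M : ℝ} {g : V → List E}

/-- Incomparable paths contribute almost disjoint copies, which bounds the sum of the
`s`-th powers of their ratios. -/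
lemma sum_rpow_pathRatio_le (hKC : G.IsInhomAttractor C KC) (hKX : ∀ i, KC i ⊆ G.X i)
    (hU : G.IsOSCWith U) (hg : ∀ i, G.IsPathFrom i (g i))
    (hgU : ∀ i, G.pathMap (g i) '' G.X (G.pathTerm i (g i)) ⊆ U i)
    (hm : ∀ j, ∀ᶠ r in 𝓝[>] (0 : ℝ), m ≤ r ^ s * coveringNumber (KC j) r)
    (hM : ∀ j, ∀ᶠ r in 𝓝[>] (0 : ℝ), r ^ s * coveringNumber (KC j) r ≤ M)
    {ι : Type*} (P : Finset ι) (w : ι → List E) (i : V) (hw : ∀ a ∈ P, G.IsPathFrom i (w a))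
    (hinc : ∀ a ∈ P, ∀ b ∈ P, a ≠ b → ¬ w a <+: w b) :
    ∑ a ∈ P, (G.pathRatio (w a ++ g (G.pathTerm i (w a))) / 2) ^ s * m ≤ M := by
  let z : ι → List E := fun a => w a ++ g (G.pathTerm i (w a))
  let F : ι → Set (Pt d) := fun a => G.pathMap (z a) '' G.X (G.pathTerm i (z a))
  let A : ι → Set (Pt d) := fun a => G.pathMap (z a) '' KC (G.pathTerm i (z a))
  have hz : ∀ a ∈ P, G.IsPathFrom i (z a) := fun a ha =>
    G.isPathFrom_append.2 ⟨hw a ha, hg _⟩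
  have hF : ∀ a, IsCompact (F a) := fun a => (G.X_compact _).image (G.continuous_pathMap _)
  have hFU : ∀ a, F a ⊆ G.pathMap (w a) '' U (G.pathTerm i (w a)) := fun a => by
    simp only [F, z]
    rw [pathMap_append, image_comp, pathTerm_append]
    exact image_mono (hgU _)
  have hsep : ∀ᶠ r in 𝓝[>] (0 : ℝ), ∀ a ∈ P, ∀ b ∈ P, a ≠ b →
      ∀ x ∈ F a, ∀ y ∈ F b, 2 * r < dist x y := by
    refine (eventually_all_finset P).2 fun a ha => (eventually_all_finset P).2 fun b hb => ?_
    by_cases hab : a = b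
    · exact Eventually.of_forall fun _ h => (h hab).elim
    · filter_upwards [eventually_two_mul_lt_dist (hF a) (hF b).isClosed
        ((hU.disjoint_image_pathMap (hw a ha) (hw b hb) (hinc a ha b hb hab)
          (hinc b hb a ha (Ne.symm hab))).mono (hFU a) (hFU b))] with r hr _ using hr
  have hlow : ∀ᶠ r in 𝓝[>] (0 : ℝ), ∀ a ∈ P,
      (G.pathRatio (z a) / 2) ^ s * m ≤ r ^ s * coveringNumber (A a) r :=
    (eventually_all_finset P).2 fun a _ =>
      eventually_le_rpow_mul_coveringNumber_image (hKC.1 _).isBounded (G.pathRatio_pos _)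
        (G.dist_pathMap _) (hm _)
  obtain ⟨r, hr, hrM, hsep, hlow⟩ :=
    (eventually_mem_nhdsWithin.and ((hM i).and (hsep.and hlow))).exists
  have hr : 0 < r := hr
  have hAF : ∀ a, A a ⊆ F a := fun a => image_mono (hKX _)
  have hsum := sum_coveringNumber_le P A (hKC.1 i).isBounded hr
    (fun a ha => G.image_pathMap_subset hKC.image_subset (hz a ha))
    (fun a ha b hb hab x hx y hy => hsep a ha b hb hab x (hAF a hx) y (hAF b hy))
  calc ∑ a ∈ P, (G.pathRatio (z a) / 2) ^ s * m
      ≤ ∑ a ∈ P, r ^ s * (coveringNumber (A a) r : ℝ) := Finset.sum_le_sum hlow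
    _ = r ^ s * ((∑ a ∈ P, coveringNumber (A a) r : ℕ) : ℝ) := by
        rw [← Finset.mul_sum, Nat.cast_sum]
    _ ≤ r ^ s * coveringNumber (KC i) r := by gcongr
    _ ≤ M := hrM

/-- The boundary paths of suitable length carry an arbitrarily small part of the sum of the
`s`-th powers of the ratios. -/
lemma exists_sum_boundaryPaths_lt (hKC : G.IsInhomAttractor C KC)
    (hKX : ∀ i, KC i ⊆ G.X i) (hU : G.IsOSCWith U) (hg : ∀ i, G.IsPathFrom i (g i))
    (hgU : ∀ i, G.pathMap (g i) '' G.X (G.pathTerm i (g i)) ⊆ U i) (hm0 : 0 < m)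
    (hm : ∀ j, ∀ᶠ r in 𝓝[>] (0 : ℝ), m ≤ r ^ s * coveringNumber (KC j) r)
    (hM : ∀ j, ∀ᶠ r in 𝓝[>] (0 : ℝ), r ^ s * coveringNumber (KC j) r ≤ M)
    (i : V) {η : ℝ} (hη : 0 < η) :
    ∃ n, ∑ γ ∈ G.boundaryPaths U i n, G.pathRatio γ ^ s < η := by
  classical
  let L : ℕ := ∑ j, (g j).length + 1
  have hgL : ∀ j, (g j).length < L := fun j =>
    Nat.lt_succ_of_le (Finset.single_le_sum (f := fun j => (g j).length)
      (fun _ _ => Nat.zero_le _) (Finset.mem_univ j))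
  have hL : 0 < L := Nat.succ_pos _
  let B : ℕ → Finset (List E) := fun k => G.boundaryPaths U i (L * k)
  let w : List E → List E := fun γ => γ ++ g (G.pathTerm i γ)
  have hc : ∀ᶠ c in 𝓝[>] (0 : ℝ), ∀ j k,
      c ≤ (G.pathRatio (g j ++ g k) / 2) ^ s := by
    refine eventually_all.2 fun j => eventually_all.2 fun k => ?_
    have : 0 < (G.pathRatio (g j ++ g k) / 2) ^ s :=
      Real.rpow_pos_of_pos (half_pos (G.pathRatio_pos _)) s
    filter_upwards [Ioo_mem_nhdsGT this] with c hc using hc.2.le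
  obtain ⟨c, hc0, hc⟩ := (eventually_mem_nhdsWithin.and hc).exists
  have hc0 : 0 < c := hc0
  have hpath : ∀ {k γ}, γ ∈ B k → G.IsPathFrom i γ := fun h => (G.mem_boundaryPaths.1 h).2.1
  have hwpath : ∀ {k γ}, γ ∈ B k → G.IsPathFrom i (w γ) := fun h =>
    G.isPathFrom_append.2 ⟨hpath h, hg _⟩
  have hwU : ∀ {k γ}, γ ∈ B k → G.pathMap (w γ) '' G.X (G.pathTerm i (w γ)) ⊆ U i := by
    intro k γ h
    simp only [w]
    rw [pathMap_append, image_comp, pathTerm_append]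
    exact (image_mono (hgU _)).trans (G.image_pathMap_subset hU.image_subset (hpath h))
  have hnot : ∀ {k k' γ γ'}, γ ∈ B k → γ' ∈ B k' → ¬ w γ <+: γ' := by
    rintro k k' γ γ' h h' ⟨t, ht⟩
    refine (G.mem_boundaryPaths.1 h').2.2 ?_
    rw [← ht]
    refine (G.image_pathMap_append_subset G.image_X_subset ?_).trans (hwU h)
    rw [ht]
    exact hpath h'
  have hinc : ∀ {k k' γ γ'}, γ ∈ B k → γ' ∈ B k' → γ ≠ γ' → ¬ w γ <+: w γ' := by
    intro k k' γ γ' h h' hne hpre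
    have hl := (G.mem_boundaryPaths.1 h).1
    have hl' := (G.mem_boundaryPaths.1 h').1
    have hwl : (w γ).length < L * k + L := by
      simp only [w, List.length_append, hl]
      exact Nat.add_lt_add_left (hgL _) _
    have hγ : γ <+: w γ := List.prefix_append _ _
    have hγ' : γ' <+: w γ' := List.prefix_append _ _
    rcases lt_trichotomy k k' with hk | rfl | hk
    · refine hnot h h' (List.prefix_of_prefix_length_le hpre hγ' ?_)
      have : L * (k + 1) ≤ L * k' := Nat.mul_le_mul_left L hk
      rw [hl']
      linarith
    · exact hne ((List.prefix_of_prefix_length_le (hγ.trans hpre) hγ'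
        (by rw [hl, hl'])).eq_of_length (by rw [hl, hl']))
    · have : L * (k' + 1) ≤ L * k := Nat.mul_le_mul_left L hk
      have hwl' : (w γ').length < L * k' + L := by
        simp only [w, List.length_append, hl']
        exact Nat.add_lt_add_left (hgL _) _
      have := (hγ.trans hpre).length_le
      rw [hl] at this
      linarith
  have hbound : ∀ N, ∑ k ∈ Finset.range N, ∑ γ ∈ B k, G.pathRatio γ ^ s ≤ M / (c * m) := by
    intro N
    have hdisj : ((Finset.range N : Finset ℕ) : Set ℕ).PairwiseDisjoint B := by
      intro k _ k' _ hkk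
      refine Finset.disjoint_left.2 fun γ h h' => hkk ?_
      have := (G.mem_boundaryPaths.1 h).1.symm.trans (G.mem_boundaryPaths.1 h').1
      exact Nat.eq_of_mul_eq_mul_left hL this
    have hmem : ∀ γ ∈ (Finset.range N).biUnion B, ∃ k, γ ∈ B k := fun γ h =>
      (Finset.mem_biUnion.1 h).imp fun _ h => h.2
    rw [← Finset.sum_biUnion hdisj, le_div_iff₀ (mul_pos hc0 hm0), Finset.sum_mul]
    refine le_trans (Finset.sum_le_sum fun γ _ => ?_)
      (sum_rpow_pathRatio_le hKC hKX hU hg hgU hm hM ((Finset.range N).biUnion B) w i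
        (fun γ h => hwpath (hmem γ h).choose_spec)
        (fun γ h γ' h' => hinc (hmem γ h).choose_spec (hmem γ' h').choose_spec))
    rw [← mul_assoc]
    gcongr
    simp only [w]
    rw [List.append_assoc, pathRatio_append, mul_div_assoc,
      Real.mul_rpow (G.pathRatio_pos _).le (half_pos (G.pathRatio_pos _)).le]
    have := (G.pathRatio_pos γ).le
    gcongr
    exact hc _ _
  have hsummable := summable_of_sum_range_le
    (fun k => Finset.sum_nonneg fun γ _ => Real.rpow_nonneg (G.pathRatio_pos γ).le s) hbound
  obtain ⟨k, hk⟩ := (hsummable.tendsto_atTop_zero.eventually_lt_const hη).exists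
  exact ⟨L * k, hk⟩

/-- Up to a set of negligible covering number, the inhomogeneous attractor keeps away from the
complement of the open sets. -/
lemma exists_boundary_layer (hKC : G.IsInhomAttractor C KC)
    (hC : G.IsCondensation C) (hU : G.IsOSCWith U) (hg : ∀ i, G.IsPathFrom i (g i))
    (hgU : ∀ i, G.pathMap (g i) '' G.X (G.pathTerm i (g i)) ⊆ U i) (hm0 : 0 < m) (hM0 : 0 < M)
    (hm : ∀ j, ∀ᶠ r in 𝓝[>] (0 : ℝ), m ≤ r ^ s * coveringNumber (KC j) r)
    (hM : ∀ j, ∀ᶠ r in 𝓝[>] (0 : ℝ), r ^ s * coveringNumber (KC j) r ≤ M)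
    (hC0 : ∀ j, Tendsto (fun r : ℝ => r ^ s * (coveringNumber (C j) r : ℝ)) (𝓝[>] 0) (𝓝 0))
    (i : V) {η : ℝ} (hη : 0 < η) :
    ∃ B : Set (Pt d), Bornology.IsBounded B ∧
      (∀ᶠ r in 𝓝[>] (0 : ℝ), r ^ s * coveringNumber B r ≤ η) ∧
      ∀ᶠ r in 𝓝[>] (0 : ℝ), ∀ x ∈ KC i \ B, ∀ y ∉ U i, 2 * r < dist x y := by
  have hKX := hKC.subset_X fun i => (hC i).2
  obtain ⟨n, hn⟩ := exists_sum_boundaryPaths_lt hKC hKX hU hg hgU hm0 hm hM i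
    (div_pos (half_pos hη) hM0)
  rw [lt_div_iff₀ hM0, Finset.sum_mul] at hn
  set P := G.boundaryPaths U i n
  set Q := G.shortPaths i n
  let A : List E → Set (Pt d) := fun γ => G.pathMap γ '' KC (G.pathTerm i γ)
  let D : List E → Set (Pt d) := fun γ => G.pathMap γ '' C (G.pathTerm i γ)
  have hA : ∀ γ, Bornology.IsBounded (A γ) := fun γ =>
    isBounded_image_of_dist_eq (hKC.1 _).isBounded (G.dist_pathMap γ)
  have hD : ∀ γ, Bornology.IsBounded (D γ) := fun γ =>
    isBounded_image_of_dist_eq (hC _).1.isBounded (G.dist_pathMap γ)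
  have hbA : Bornology.IsBounded (⋃ γ ∈ P, A γ) :=
    (Bornology.isBounded_biUnion_finset P).2 fun γ _ => hA γ
  have hbD : Bornology.IsBounded (⋃ γ ∈ Q, D γ) :=
    (Bornology.isBounded_biUnion_finset Q).2 fun γ _ => hD γ
  refine ⟨(⋃ γ ∈ P, A γ) ∪ ⋃ γ ∈ Q, D γ, hbA.union hbD, ?_, ?_⟩
  · have h1 : ∀ᶠ r in 𝓝[>] (0 : ℝ), ∀ γ ∈ P,
        r ^ s * coveringNumber (A γ) r ≤ G.pathRatio γ ^ s * M :=
      (eventually_all_finset P).2 fun γ _ => eventually_rpow_mul_coveringNumber_image_le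
        (hKC.1 _).isBounded (G.pathRatio_pos γ) (G.dist_pathMap γ) (hM _)
    let ζ : List E → ℝ := fun γ => η / 2 / (Q.card + 1) / G.pathRatio γ ^ s
    have hζ : ∀ γ, 0 < ζ γ := fun γ => by
      have := Real.rpow_pos_of_pos (G.pathRatio_pos γ) s
      positivity
    have h2 : ∀ᶠ r in 𝓝[>] (0 : ℝ), ∀ γ ∈ Q,
        r ^ s * coveringNumber (D γ) r ≤ G.pathRatio γ ^ s * ζ γ :=
      (eventually_all_finset Q).2 fun γ _ => eventually_rpow_mul_coveringNumber_image_le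
        (hC _).1.isBounded (G.pathRatio_pos γ) (G.dist_pathMap γ)
        (((hC0 _).eventually_lt_const (hζ γ)).mono fun _ h => h.le)
    filter_upwards [h1, h2, self_mem_nhdsWithin] with r h1 h2 hr
    have hr : 0 < r := hr
    have h3 : ∑ γ ∈ Q, G.pathRatio γ ^ s * ζ γ ≤ η / 2 := by
      have : ∀ γ ∈ Q, G.pathRatio γ ^ s * ζ γ = η / 2 / (Q.card + 1) := fun γ _ =>
        mul_div_cancel₀ _ (Real.rpow_pos_of_pos (G.pathRatio_pos γ) s).ne'
      rw [Finset.sum_congr rfl this, Finset.sum_const, nsmul_eq_mul, ← mul_div_assoc,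
        div_le_iff₀ (by positivity)]
      nlinarith
    have h4 := (coveringNumber_union_le hbA hbD hr).trans (Nat.add_le_add
      (coveringNumber_biUnion_le P A (fun γ _ => hA γ) hr)
      (coveringNumber_biUnion_le Q D (fun γ _ => hD γ) hr))
    calc r ^ s * (coveringNumber ((⋃ γ ∈ P, A γ) ∪ ⋃ γ ∈ Q, D γ) r : ℝ)
        ≤ r ^ s * ((∑ γ ∈ P, coveringNumber (A γ) r +
            ∑ γ ∈ Q, coveringNumber (D γ) r : ℕ) : ℝ) := by gcongr
      _ = ∑ γ ∈ P, r ^ s * (coveringNumber (A γ) r : ℝ) +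
          ∑ γ ∈ Q, r ^ s * (coveringNumber (D γ) r : ℝ) := by
          rw [← Finset.mul_sum, ← Finset.mul_sum]
          push_cast
          ring
      _ ≤ η := by linarith [Finset.sum_le_sum h1, Finset.sum_le_sum h2]
  · have hfin : {γ : List E | γ.length = n}.Finite := List.finite_length_eq E n
    have hsep : ∀ᶠ r in 𝓝[>] (0 : ℝ), ∀ γ ∈ {γ : List E | γ.length = n},
        G.pathMap γ '' G.X (G.pathTerm i γ) ⊆ U i →
        ∀ x ∈ G.pathMap γ '' G.X (G.pathTerm i γ), ∀ y ∈ (U i)ᶜ, 2 * r < dist x y := by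
      refine (eventually_all_finite hfin).2 fun γ _ => ?_
      by_cases h : G.pathMap γ '' G.X (G.pathTerm i γ) ⊆ U i
      · filter_upwards [eventually_two_mul_lt_dist
          ((G.X_compact _).image (G.continuous_pathMap γ)) (hU.2.1 i).isClosed_compl
          (disjoint_compl_right.mono_left h)] with r hr _ using hr
      · exact Eventually.of_forall fun _ h' => (h h').elim
    filter_upwards [hsep] with r hr x hx y hy
    rcases hKC.exists_path n hx.1 with ⟨γ, hγn, hγ, hxγ⟩ | ⟨γ, hγn, hγ, hxγ⟩
    · refine hr γ hγn ?_ x (image_mono (hKX _) hxγ) y hy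
      by_contra hbad
      exact hx.2 (Or.inl (mem_biUnion (G.mem_boundaryPaths.2 ⟨hγn, hγ, hbad⟩) hxγ))
    · exact (hx.2 (Or.inr (mem_biUnion (G.mem_shortPaths.2 ⟨hγn, hγ⟩) hxγ))).elim

/-- The covering numbers of the pieces add up to that of the union, up to `o(r ^ (-s))`. -/
lemma tendsto_sum_sub_coveringNumber_iUnion (hKC : G.IsInhomAttractor C KC)
    (hC : G.IsCondensation C) (hU : G.IsOSCWith U)
    (hX : Pairwise fun i j : V => Disjoint (interior (G.X i)) (interior (G.X j)))
    (hg : ∀ i, G.IsPathFrom i (g i))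
    (hgU : ∀ i, G.pathMap (g i) '' G.X (G.pathTerm i (g i)) ⊆ U i) (hm0 : 0 < m) (hM0 : 0 < M)
    (hm : ∀ j, ∀ᶠ r in 𝓝[>] (0 : ℝ), m ≤ r ^ s * coveringNumber (KC j) r)
    (hM : ∀ j, ∀ᶠ r in 𝓝[>] (0 : ℝ), r ^ s * coveringNumber (KC j) r ≤ M)
    (hC0 : ∀ j, Tendsto (fun r : ℝ => r ^ s * (coveringNumber (C j) r : ℝ)) (𝓝[>] 0) (𝓝 0)) :
    Tendsto (fun r : ℝ => ∑ i, r ^ s * (coveringNumber (KC i) r : ℝ) -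
      r ^ s * (coveringNumber (⋃ i, KC i) r : ℝ)) (𝓝[>] 0) (𝓝 0) := by
  have hKX := hKC.subset_X fun i => (hC i).2
  have hXU : ∀ {i j}, i ≠ j → ∀ y ∈ G.X j, y ∉ U i := by
    intro i j hij y hy hyU
    have hyi : y ∈ interior (G.X i) := interior_maximal (hU.2.2.2.1 i) (hU.2.1 i) hyU
    rw [← G.X_regular j] at hy
    exact ((hX hij).closure_right isOpen_interior).le_bot ⟨hyi, hy⟩
  have hbd : Bornology.IsBounded (⋃ i, KC i) :=
    Bornology.isBounded_iUnion.2 fun i => (hKC.1 i).isBounded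
  rw [Metric.tendsto_nhds]
  intro ε hε
  choose B hBb hB hBsep using fun i => exists_boundary_layer hKC hC hU hg hgU hm0 hM0 hm hM hC0 i
    (η := ε / (Fintype.card V + 1)) (by positivity)
  filter_upwards [eventually_all.2 hB, eventually_all.2 hBsep, self_mem_nhdsWithin]
    with r h1 h2 hr
  have hr : 0 < r := hr
  have hle : coveringNumber (⋃ i, KC i) r ≤ ∑ i, coveringNumber (KC i) r := by
    simpa using coveringNumber_biUnion_le Finset.univ KC (fun i _ => (hKC.1 i).isBounded) hr
  have hge : ∑ i, coveringNumber (KC i) r ≤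
      coveringNumber (⋃ i, KC i) r + ∑ i, coveringNumber (B i) r := by
    have hsum := sum_coveringNumber_le Finset.univ (fun i => KC i \ B i) hbd hr
      (fun i _ => sdiff_subset.trans (subset_iUnion KC i))
      (fun i _ j _ hij x hx y hy => h2 i x hx y (hXU hij y (hKX j hy.1)))
    refine le_trans ?_ (Nat.add_le_add_right hsum _)
    rw [← Finset.sum_add_distrib]
    refine Finset.sum_le_sum fun i _ => ?_
    have hdb := (hKC.1 i).isBounded.subset (sdiff_subset (t := B i))
    refine (coveringNumber_mono (hdb.union (hBb i)) hr ?_).trans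
      (coveringNumber_union_le hdb (hBb i) hr)
    rw [sdiff_union_self]
    exact subset_union_left
  have hle' : (coveringNumber (⋃ i, KC i) r : ℝ) ≤ ∑ i, (coveringNumber (KC i) r : ℝ) := by
    exact_mod_cast hle
  have hge' : ∑ i, (coveringNumber (KC i) r : ℝ) ≤
      coveringNumber (⋃ i, KC i) r + ∑ i, (coveringNumber (B i) r : ℝ) := by
    exact_mod_cast hge
  have hsB : ∑ i, r ^ s * (coveringNumber (B i) r : ℝ) < ε := by
    refine (Finset.sum_le_sum fun i _ => h1 i).trans_lt ?_
    rw [Finset.sum_const, nsmul_eq_mul, Finset.card_univ, ← mul_div_assoc,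
      div_lt_iff₀ (by positivity)]
    nlinarith
  have hrs : 0 < r ^ s := Real.rpow_pos_of_pos hr s
  rw [← Finset.mul_sum] at hsB
  rw [Real.dist_eq, sub_zero, ← Finset.mul_sum, abs_of_nonneg] <;> nlinarith

end Bounds

end MWGraph

theorem stmt3 {d : ℕ} {V E : Type} [Fintype V] [Fintype E] [DecidableEq V]
    (G : MWGraph d V E) (hSC : G.StronglyConnected)
    (C K KC U : V → Set (Pt d))
    (hC : G.IsCondensation C) (hK : G.IsAttractor K) (hKC : G.IsInhomAttractor C KC)
    (hU : G.IsOSCWith U) (hUK : ∀ i, (U i ∩ K i).Nonempty)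
    (hCU : ∀ i, C i ⊆ closure (U i))
    (s0 : ℝ) (hs0 : IsS0 G s0)
    (hint : ∀ i : V, ∫⁻ t in Set.Ioi (0 : ℝ),
      ENNReal.ofReal (Real.exp (-s0 * t) * (coveringNumber (C i) (Real.exp (-t)) : ℝ)) < ⊤)
    (hX : Pairwise fun i j : V => Disjoint (interior (G.X i)) (interior (G.X j)))
    (τ : ℝ) (hτ : 0 < τ) (hGM : G.GM = {x : ℝ | ∃ n : ℤ, x = n * τ})
    (δ : ℝ) (hδ : 0 < δ) (h : V → ℝ → ℝ) (hge : ∀ i x, δ ≤ h i x)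
    (hper : ∀ i x, h i (x + τ) = h i x)
    (hlim : ∀ i : V, ∀ y ∈ Set.Ico (0 : ℝ) τ,
      Tendsto (fun n : ℕ => (coveringNumber (KC i) (Real.exp (-(n * τ + y))) : ℝ) /
        (h i y * Real.exp (s0 * (n * τ + y)))) atTop (𝓝 1)) :
    ∀ y ∈ Set.Ico (0 : ℝ) τ,
      Tendsto (fun n : ℕ => Real.exp (-s0 * (n * τ + y)) *
        (coveringNumber (⋃ i : V, KC i) (Real.exp (-(n * τ + y))) : ℝ))
        atTop (𝓝 (∑ i : V, h i y)) := by
  have hs : 0 ≤ s0 := hs0.1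
  have hpos : ∀ i x, 0 < h i x := fun i x => hδ.trans_le (hge i x)
  have hlim' : ∀ i, ∀ y ∈ Set.Ico (0 : ℝ) τ, Tendsto (fun n : ℕ => Real.exp (-s0 * (n * τ + y)) *
      (coveringNumber (KC i) (Real.exp (-(n * τ + y))) : ℝ)) atTop (𝓝 (h i y)) := by
    intro i y hy
    have h1 := (hlim i y hy).const_mul (h i y)
    rw [mul_one] at h1
    refine h1.congr fun n => ?_
    rw [← mul_div_assoc, mul_div_mul_left _ _ (hpos i y).ne', neg_mul,
      Real.exp_neg (s0 * (n * τ + y)), div_eq_inv_mul]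
  have hbounds : ∀ i, ∀ᶠ r in 𝓝[>] (0 : ℝ),
      Real.exp (-(s0 * τ)) * (h i 0 / 2) ≤ r ^ s0 * coveringNumber (KC i) r ∧
      r ^ s0 * coveringNumber (KC i) r ≤ Real.exp (s0 * τ) * (2 * h i 0) := fun i =>
    eventually_bounds_of_tendsto (hKC.1 i).isBounded hs hτ (hpos i 0)
      (by simpa only [add_zero] using hlim' i 0 ⟨le_rfl, hτ⟩)
  choose g hg hgU using G.exists_interior_path hK hU hUK
  have hdiff := MWGraph.tendsto_sum_sub_coveringNumber_iUnion hKC hC hU hX hg hgU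
    (s := s0) (m := Real.exp (-(s0 * τ)) * (δ / 2))
    (M := Real.exp (s0 * τ) * (2 * (∑ i, h i 0 + 1)))
    (by positivity)
    (by
      have := Finset.sum_nonneg fun i (_ : i ∈ Finset.univ) => (hpos i 0).le
      positivity)
    (fun j => (hbounds j).mono fun r hr => le_trans (by gcongr; exact hge j 0) hr.1)
    (fun j => (hbounds j).mono fun r hr => hr.2.trans (by
      have := Finset.single_le_sum (f := fun i => h i 0) (fun i _ => (hpos i 0).le)
        (Finset.mem_univ j)
      gcongr
      linarith))
    (fun j => tendsto_rpow_mul_coveringNumber_zero (hC j).1.isBounded hs (hint j))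
  intro y hy
  have hscale : Tendsto (fun n : ℕ => Real.exp (-(n * τ + y))) atTop (𝓝[>] 0) :=
    tendsto_nhdsWithin_iff.2 ⟨Real.tendsto_exp_neg_atTop_nhds_zero.comp
      (tendsto_atTop_add_const_right _ _ (tendsto_natCast_atTop_atTop.atTop_mul_const hτ)),
      Eventually.of_forall fun n => Real.exp_pos _⟩
  have hsum := tendsto_finsetSum Finset.univ fun i (_ : i ∈ Finset.univ) => hlim' i y hy
  have hmain := hsum.sub (hdiff.comp hscale)
  rw [sub_zero] at hmain
  refine hmain.congr fun n => ?_
  have hexp : Real.exp (-(n * τ + y)) ^ s0 = Real.exp (-s0 * (n * τ + y)) := by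
    rw [← Real.exp_mul]
    ring_nf
  simp only [Function.comp_apply, hexp]
  ring
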